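/- There is an absolute constant c such that the following holds. Let m ≥ 4 and 0 ≤ η ≤ m be integers and let 𝒢 be a family of subsets of [m] such that: (i) ∅ ∈ 𝒢; (ii) for every X ∈ 𝒢 there is at most one Y ∈ 𝒢∖{∅} with Y ⊆ X; (iii) the one-element members of 𝒢 are exactly the singletons {η+1}, {η+2}, …, {m}. Let 𝒯 be the set of minimal elements of 𝒢∖{∅}, let G be the graph on vertex set [η] whose edges are the two-element members of 𝒯, and let e be the number of edges of G. Set a = η/m, b = e/C(η,2) (with b = 0 if η ≤ 1), and μ = 1 if a < 1/2, μ = (1−a)/a if a ≥ 1/2. Let Υ₁ be the set of full chains in Q_m containing exactly one member of 𝒢. Then |Υ₁| ≥ m!·( b·(a³ − a²)·μ + (a² − a³)·μ − c/m ). -/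

import Mathlib

/-!
Identify a full chain with the order `σ` in which the elements of `[m]` are added, so that `σ 0` and
`σ 1` are the first two elements.  If `σ 0 ∈ [η]` and `σ 1 ∉ [η]`, the chain meets `𝒢` only in `∅`:
its one-element set `{σ 0}` is not in `𝒢`, and every later set `A` properly contains the singleton
`{σ 1} ∈ 𝒢`, so `A ∈ 𝒢` would have two distinct nonempty members of `𝒢` below it
(`permChain_inter`).

There are `η (m - η) (m - 2)!` such orders, and distinct orders give distinct chains
(`permChain_injective`), so `|Υ₁| ≥ η (m - η) (m - 2)! ≥ m! (a - a²)` (`card_chainsWith_one_ge`).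
This suffices: since `b ≥ 0` and `0 ≤ μ ≤ 1`, the main term `(1 - b)(a² - a³) μ` is at most
`a² - a³ ≤ a - a²`.  The error term is therefore not needed and any positive `c` will do.
-/

open scoped Classical

/-- The set of full (maximal) chains in the Boolean lattice `Q_m`: families of `m + 1`
pairwise comparable subsets of `[m]` (hence of all sizes `0, 1, …, m`). -/
def fullChains (m : ℕ) : Finset (Finset (Finset (Fin m))) :=
  Finset.univ.filter fun σ => σ.card = m + 1 ∧ ∀ A ∈ σ, ∀ B ∈ σ, A ⊆ B ∨ B ⊆ A

/-- The set of full chains in `Q_m` containing exactly `i` members of `𝒢`. -/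
def chainsWith (m : ℕ) (𝒢 : Finset (Finset (Fin m))) (i : ℕ) :
    Finset (Finset (Finset (Fin m))) :=
  (fullChains m).filter fun σ => (σ ∩ 𝒢).card = i

/-- The set of minimal elements of `𝒢 ∖ {∅}`. -/
def minElts {m : ℕ} (𝒢 : Finset (Finset (Fin m))) : Finset (Finset (Fin m)) :=
  𝒢.filter fun T => T ≠ ∅ ∧ ∀ Y ∈ 𝒢, Y ≠ ∅ → Y ⊆ T → Y = T

/-- The set of the first `k` elements in the order `σ 0, σ 1, …`. -/
def initSeg {m : ℕ} (σ : Equiv.Perm (Fin m)) (k : ℕ) : Finset (Fin m) :=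
  Finset.univ.filter fun x => (σ.symm x : ℕ) < k

/-- The full chain that adds the elements of `Fin m` in the order `σ 0, σ 1, …`. -/
def permChain {m : ℕ} (σ : Equiv.Perm (Fin m)) : Finset (Finset (Fin m)) :=
  (Finset.range (m + 1)).image (initSeg σ)

lemma mem_initSeg {m : ℕ} (σ : Equiv.Perm (Fin m)) (k : ℕ) (x : Fin m) :
    x ∈ initSeg σ k ↔ (σ.symm x : ℕ) < k := by
  simp [initSeg]

lemma card_initSeg {m : ℕ} (σ : Equiv.Perm (Fin m)) (k : ℕ) (hk : k ≤ m) :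
    (initSeg σ k).card = k := by
  have h : initSeg σ k
      = (Finset.univ.filter fun i : Fin m => (i : ℕ) < k).map σ.toEmbedding := by
    ext x
    simp [initSeg, Finset.mem_map_equiv]
  rw [h, Finset.card_map, Fin.card_filter_val_lt, min_eq_right hk]

lemma permChain_mem_fullChains {m : ℕ} (σ : Equiv.Perm (Fin m)) :
    permChain σ ∈ fullChains m := by
  rw [fullChains, Finset.mem_filter]
  refine ⟨Finset.mem_univ _, ?_, ?_⟩
  · rw [permChain, Finset.card_image_of_injOn, Finset.card_range]
    intro k hk l hl h
    simp only [Finset.coe_range, Set.mem_Iio] at hk hl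
    rw [← card_initSeg σ k (by omega), ← card_initSeg σ l (by omega)]
    exact congrArg _ h
  · intro A hA B hB
    simp only [permChain, Finset.mem_image] at hA hB
    obtain ⟨k, -, rfl⟩ := hA
    obtain ⟨l, -, rfl⟩ := hB
    rcases le_total k l with h | h
    · left; intro x; simp only [mem_initSeg]; omega
    · right; intro x; simp only [mem_initSeg]; omega

/-- The chain determines the order, because its member of size `k` is the `k`-th initial
segment. -/
lemma permChain_injective {m : ℕ} :
    Function.Injective (permChain : Equiv.Perm (Fin m) → Finset (Finset (Fin m))) := by
  intro σ τ h
  have key : ∀ k ≤ m, initSeg σ k = initSeg τ k := by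
    intro k hk
    have h1 : initSeg σ k ∈ permChain τ := by
      rw [← h]
      exact Finset.mem_image_of_mem _ (Finset.mem_range.2 (by omega))
    simp only [permChain, Finset.mem_image, Finset.mem_range] at h1
    obtain ⟨l, hl, hlk⟩ := h1
    have h2 := congrArg Finset.card hlk
    rw [card_initSeg _ _ (by omega), card_initSeg _ _ hk] at h2
    rw [← hlk, h2]
  have hs : σ.symm = τ.symm := by
    ext x
    have hx : ∀ k ≤ m, ((σ.symm x : ℕ) < k ↔ (τ.symm x : ℕ) < k) := fun k hk => by
      rw [← mem_initSeg, ← mem_initSeg, key k hk]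
    have h1 := hx ((σ.symm x : ℕ) + 1) (σ.symm x).isLt
    have h2 := hx ((τ.symm x : ℕ) + 1) (τ.symm x).isLt
    omega
  rw [← σ.symm_symm, hs, τ.symm_symm]

/-- A chain whose first element lies in `[η]` and whose second does not meets `𝒢` only in `∅`. -/
lemma permChain_inter {n η : ℕ} {𝒢 : Finset (Finset (Fin (n + 2)))}
    (h0 : (∅ : Finset (Fin (n + 2))) ∈ 𝒢)
    (hU : ∀ X ∈ 𝒢, ∀ Y₁ ∈ 𝒢, ∀ Y₂ ∈ 𝒢,
          Y₁ ≠ ∅ → Y₂ ≠ ∅ → Y₁ ⊆ X → Y₂ ⊆ X → Y₁ = Y₂)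
    (hS : ∀ x : Fin (n + 2), ({x} ∈ 𝒢 ↔ η ≤ (x : ℕ)))
    (σ : Equiv.Perm (Fin (n + 2))) (hσ0 : (σ 0 : ℕ) < η) (hσ1 : η ≤ (σ 1 : ℕ)) :
    permChain σ ∩ 𝒢 = {∅} := by
  ext A
  simp only [Finset.mem_inter, Finset.mem_singleton, permChain, Finset.mem_image,
    Finset.mem_range]
  constructor
  · rintro ⟨⟨k, -, rfl⟩, hA⟩
    by_contra hne
    have hk : k ≠ 0 := by
      rintro rfl
      exact hne (by ext x; simp [mem_initSeg])
    have m0 : σ 0 ∈ initSeg σ k := by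
      rw [mem_initSeg]; simp; omega
    by_cases hk1 : k = 1
    · have : initSeg σ k = {σ 0} := by
        ext x
        rw [mem_initSeg, hk1, Finset.mem_singleton, ← Equiv.symm_apply_eq, Fin.ext_iff]
        simp
      rw [this, hS] at hA
      omega
    · have m1 : σ 1 ∈ initSeg σ k := by
        rw [mem_initSeg]; simp; omega
      have := hU _ hA _ hA {σ 1} ((hS _).2 hσ1) hne (Finset.singleton_ne_empty _)
        subset_rfl (by simpa using m1)
      rw [this, Finset.mem_singleton] at m0
      rw [m0] at hσ0
      omega
  · rintro rfl
    exact ⟨⟨0, by omega, by ext x; simp [mem_initSeg]⟩, h0⟩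

lemma card_chainsWith_one_ge {n η : ℕ} {𝒢 : Finset (Finset (Fin (n + 2)))} (hη : η ≤ n + 2)
    (h0 : (∅ : Finset (Fin (n + 2))) ∈ 𝒢)
    (hU : ∀ X ∈ 𝒢, ∀ Y₁ ∈ 𝒢, ∀ Y₂ ∈ 𝒢,
          Y₁ ≠ ∅ → Y₂ ≠ ∅ → Y₁ ⊆ X → Y₂ ⊆ X → Y₁ = Y₂)
    (hS : ∀ x : Fin (n + 2), ({x} ∈ 𝒢 ↔ η ≤ (x : ℕ))) :
    η * ((n + 2 - η) * n.factorial) ≤ (chainsWith (n + 2) 𝒢 1).card := by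
  -- An order is coded by its first element `x`, a `z` with second element `z + 1` (this reading
  -- of `decomposeFin` is valid when `x < η ≤ z + 1`), and an arrangement of the rest.
  let f : Fin (n + 2) × Fin (n + 1) × Equiv.Perm (Fin n) → Finset (Finset (Fin (n + 2))) :=
    fun p => permChain (Equiv.Perm.decomposeFin.symm
      (p.1, Equiv.Perm.decomposeFin.symm (p.2.1, p.2.2)))
  have hf : Function.Injective f := by
    rintro ⟨x, z, e⟩ ⟨x', z', e'⟩ h
    have h1 := Equiv.Perm.decomposeFin.symm.injective (permChain_injective h)
    simp only [Prod.mk.injEq] at h1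
    have h2 := Equiv.Perm.decomposeFin.symm.injective h1.2
    simp only [Prod.mk.injEq] at h2
    simp [h1.1, h2.1, h2.2]
  let S : Finset (Fin (n + 2) × Fin (n + 1) × Equiv.Perm (Fin n)) :=
    (Finset.univ.filter fun x : Fin (n + 2) => (x : ℕ) < η) ×ˢ
      ((Finset.univ.filter fun z : Fin (n + 1) => η ≤ (z : ℕ) + 1) ×ˢ Finset.univ)
  have hS1 : (Finset.univ.filter fun x : Fin (n + 2) => (x : ℕ) < η).card = η := by
    rw [Fin.card_filter_val_lt, min_eq_right hη]
  rcases Nat.eq_zero_or_pos η with rfl | hpos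
  · simp
  have hS2 : (Finset.univ.filter fun z : Fin (n + 1) => η ≤ (z : ℕ) + 1).card = n + 2 - η := by
    have h1 : (Finset.univ.filter fun z : Fin (n + 1) => (z : ℕ) < η - 1).card = η - 1 := by
      rw [Fin.card_filter_val_lt, min_eq_right (by omega)]
    have h2 := Finset.card_filter_add_card_filter_not (s := (Finset.univ : Finset (Fin (n + 1))))
      (fun z => (z : ℕ) < η - 1)
    have h3 : (Finset.univ.filter fun z : Fin (n + 1) => ¬ (z : ℕ) < η - 1)
        = Finset.univ.filter fun z : Fin (n + 1) => η ≤ (z : ℕ) + 1 := by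
      ext z
      simp only [Finset.mem_filter, Finset.mem_univ, true_and]
      omega
    rw [h1, h3, Finset.card_univ, Fintype.card_fin] at h2
    omega
  have hcard : S.card = η * ((n + 2 - η) * n.factorial) := by
    rw [Finset.card_product, Finset.card_product, hS1, hS2, Finset.card_univ,
      Fintype.card_perm, Fintype.card_fin]
  rw [← hcard]
  refine Finset.card_le_card_of_injOn f ?_ hf.injOn
  rintro ⟨x, z, e⟩ hp
  simp only [S, Finset.coe_product, Set.mem_prod, Finset.mem_coe, Finset.mem_filter,
    Finset.mem_univ, true_and, and_true] at hp
  obtain ⟨hx, hz⟩ := hp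
  have hne : z.succ ≠ x := by
    intro h
    rw [← h, Fin.val_succ] at hx
    omega
  simp only [Finset.mem_coe, chainsWith, Finset.mem_filter]
  refine ⟨permChain_mem_fullChains _, ?_⟩
  rw [permChain_inter (η := η) h0 hU hS, Finset.card_singleton]
  · simpa using hx
  · have h1 : (1 : Fin (n + 2)) = (0 : Fin (n + 1)).succ := by simp
    rw [h1, Equiv.Perm.decomposeFin_symm_apply_succ, Equiv.Perm.decomposeFin_symm_apply_zero,
      Equiv.swap_apply_of_ne_of_ne (Fin.succ_ne_zero _) hne, Fin.val_succ]
    exact hz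

/-- Lower bound on the number of full chains meeting `𝒢` exactly once, where `𝒢` has
`∅`, at most one nonempty member below any member, singletons exactly `{η+1}, …, {m}`
(elements of `[m] = {1, …, m}` being encoded by `Fin m`, i.e. `i + 1 ↔ (i : Fin m)`),
`e` two-element minimal members, `a = η/m`, `b = e/C(η,2)` and `μ` as in the paper. -/
theorem ups1_lower_bound :
    ∃ c : ℝ, 0 < c ∧ ∀ (m η : ℕ), 4 ≤ m → η ≤ m →
      ∀ 𝒢 : Finset (Finset (Fin m)),
        (∅ : Finset (Fin m)) ∈ 𝒢 →
        (∀ X ∈ 𝒢, ∀ Y₁ ∈ 𝒢, ∀ Y₂ ∈ 𝒢,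
          Y₁ ≠ ∅ → Y₂ ≠ ∅ → Y₁ ⊆ X → Y₂ ⊆ X → Y₁ = Y₂) →
        (∀ x : Fin m, ({x} ∈ 𝒢 ↔ η ≤ (x : ℕ))) →
        let e : ℕ := ((minElts 𝒢).filter fun T => T.card = 2).card
        let a : ℝ := (η : ℝ) / m
        let b : ℝ := if η ≤ 1 then 0 else (e : ℝ) / (η.choose 2)
        let μ : ℝ := if a < 1 / 2 then 1 else (1 - a) / a
        ((chainsWith m 𝒢 1).card : ℝ)
          ≥ m.factorial * (b * (a ^ 3 - a ^ 2) * μ + (a ^ 2 - a ^ 3) * μ - c / m) := by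
  refine ⟨1, one_pos, ?_⟩
  intro m η hm hη 𝒢 h0 hU hS e a b μ
  obtain ⟨n, rfl⟩ : ∃ n, m = n + 2 := ⟨m - 2, by omega⟩
  have hM : (0 : ℝ) < ((n + 2 : ℕ) : ℝ) := by positivity
  have hηR : (η : ℝ) ≤ ((n + 2 : ℕ) : ℝ) := by exact_mod_cast hη
  have ha0 : 0 ≤ a := by positivity
  have ha1 : a ≤ 1 := div_le_one_of_le₀ hηR hM.le
  have hb : 0 ≤ b := by
    simp only [b]; split_ifs <;> positivity
  have hμ : 0 ≤ μ ∧ μ ≤ 1 := by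
    simp only [μ]
    split_ifs with h
    · simp
    · have : 0 < a := by linarith
      exact ⟨div_nonneg (by linarith) this.le, (div_le_one this).2 (by linarith)⟩
  have hq : 0 ≤ a ^ 2 - a ^ 3 := by nlinarith [mul_nonneg (sq_nonneg a) (sub_nonneg.2 ha1)]
  have hmain : b * (a ^ 3 - a ^ 2) * μ + (a ^ 2 - a ^ 3) * μ - 1 / ((n + 2 : ℕ) : ℝ)
      ≤ a - a ^ 2 := by
    have h1 : 0 ≤ b * (a ^ 2 - a ^ 3) * μ := mul_nonneg (mul_nonneg hb hq) hμ.1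
    have h2 : (a ^ 2 - a ^ 3) * μ ≤ a ^ 2 - a ^ 3 := mul_le_of_le_one_right hq hμ.2
    have h3 : 0 ≤ 1 / ((n + 2 : ℕ) : ℝ) := by positivity
    have h4 : 0 ≤ a * (1 - a) ^ 2 := by positivity
    nlinarith
  have hcount : ((η * ((n + 2 - η) * n.factorial) : ℕ) : ℝ)
      ≤ ((chainsWith (n + 2) 𝒢 1).card : ℝ) :=
    Nat.cast_le.2 (card_chainsWith_one_ge hη h0 hU hS)
  refine ge_iff_le.2 (le_trans (mul_le_mul_of_nonneg_left hmain (by positivity))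
    (le_trans ?_ hcount))
  have hfac : ((n + 2).factorial : ℝ) = (n + 2) * (n + 1) * n.factorial := by
    rw [Nat.factorial_succ, Nat.factorial_succ]; push_cast; ring
  have hηa : (η : ℝ) = a * (n + 2) := by
    simp only [a]; push_cast; field_simp
  rw [Nat.cast_mul, Nat.cast_mul, Nat.cast_sub hη, hfac, hηa]
  push_cast
  have h5 : 0 ≤ (n.factorial : ℝ) * (a * (1 - a)) * (n + 2) := by
    have : 0 ≤ 1 - a := by linarith
    positivity
  nlinarith
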